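/- Let d ≥ 1 be an integer, let μ be the normalized Haar probability measure on U(d), let Γ(X) = Σ_{i=1}^r K_i X K_iᴴ be a Kraus channel on d×d matrices (so Σ_i K_iᴴ K_i = I), and let ψ ∈ ℂ^d be any unit vector. Then ∫_{U(d)} ⟨Uψ, Γ(Uψ(Uψ)ᴴ) Uψ⟩ dμ(U) = (d^{−1}·Σ_{i=1}^r |tr(K_i)|² + 1) / (d + 1). (The average channel fidelity over Haar random pure states is determined by Σ_i |tr K_i|²; equation relating channel fidelity and entanglement fidelity.) -/

import Mathlib

open MeasureTheory Matrix

attribute [local instance] Matrix.normedAddCommGroup Matrix.normedSpace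

noncomputable instance {n : Type*} [Fintype n] [DecidableEq n] :
    MeasurableSpace (Matrix.unitaryGroup n ℂ) := borel _

instance {n : Type*} [Fintype n] [DecidableEq n] :
    BorelSpace (Matrix.unitaryGroup n ℂ) := ⟨rfl⟩

lemma phase_mem {d : ℕ} (j : Fin d) :
    Matrix.diagonal (fun k => if k = j then Complex.I else 1) ∈ Matrix.unitaryGroup (Fin d) ℂ := by
  rw [Matrix.mem_unitaryGroup_iff, Matrix.star_eq_conjTranspose, Matrix.diagonal_conjTranspose,
    Matrix.diagonal_mul_diagonal, ← Matrix.diagonal_one]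
  congr 1
  funext k
  by_cases h : k = j <;> simp [h]

lemma mix_mem {d : ℕ} (a b : Fin d) (hab : a ≠ b) :
    (1 - ((1 - Complex.I) / 2) • Matrix.vecMulVec (Pi.single a 1 - Pi.single b 1)
      (Pi.single a 1 - Pi.single b 1) : Matrix (Fin d) (Fin d) ℂ)
      ∈ Matrix.unitaryGroup (Fin d) ℂ := by
  rw [Matrix.mem_unitaryGroup_iff, Matrix.star_eq_conjTranspose]
  set u : Fin d → ℂ := Pi.single a 1 - Pi.single b 1 with hu
  have hs : star u = u := by
    funext k
    simp only [hu, Pi.star_apply, Pi.sub_apply, Pi.single_apply]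
    split_ifs <;> simp
  have huu : u ⬝ᵥ u = 2 := by
    simp [hu, hab, hab.symm]
    norm_num
  have hP : (vecMulVec u u)ᴴ = vecMulVec u u := by
    rw [Matrix.conjTranspose_vecMulVec, hs]
  have hPP : vecMulVec u u * vecMulVec u u = (2:ℂ) • vecMulVec u u := by
    rw [Matrix.vecMulVec_mul_vecMulVec, huu]
    ext i j; simp [vecMulVec_apply]; ring
  rw [conjTranspose_sub, conjTranspose_smul, hP, conjTranspose_one, sub_mul, mul_sub, mul_sub,
    Matrix.smul_mul, Matrix.mul_smul, Matrix.mul_smul, Matrix.smul_mul, hPP]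
  ext i j
  simp
  ring_nf
  simp

structure Mom (d : ℕ) (R : Type*) [CommRing R] [Algebra ℂ R] (x y : Fin d → R)
    (E : R →ₗ[ℂ] ℂ) : Prop where
  one : E 1 = 1
  norm : ∑ a, x a * y a = 1
  inv : ∀ V ∈ Matrix.unitaryGroup (Fin d) ℂ, ∀ a b c e,
    E (x a * x b * (y c * y e)) = E ((∑ k, V a k • x k) * (∑ k, V b k • x k) *
      ((∑ k, star (V c k) • y k) * (∑ k, star (V e k) • y k)))

variable {d : ℕ} {R : Type*} [CommRing R] [Algebra ℂ R] {x y : Fin d → R}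
    {E : R →ₗ[ℂ] ℂ}

lemma Mom.phase (h : Mom d R x y E) (j a b c e : Fin d) :
    E (x a * x b * (y c * y e)) = ((if a = j then Complex.I else 1) *
      (if b = j then Complex.I else 1) * ((if c = j then -Complex.I else 1) *
      (if e = j then -Complex.I else 1))) * E (x a * x b * (y c * y e)) := by
  conv_lhs => rw [h.inv _ (phase_mem j)]
  have h1 : ∀ (s : Fin d → ℂ) (z : Fin d → R) (a : Fin d),
      ∑ k, (Matrix.diagonal s a k) • z k = s a • z a := by
    intro s z a
    simp [Matrix.diagonal_apply]
  have h2 : ∀ a k : Fin d, star (Matrix.diagonal (fun k => if k = j then Complex.I else 1) a k) =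
      Matrix.diagonal (fun k => if k = j then -Complex.I else 1) a k := by
    intro a k
    simp only [Matrix.diagonal_apply]
    split_ifs <;> simp
  simp only [h2, h1]
  rw [smul_mul_smul_comm, smul_mul_smul_comm, smul_mul_smul_comm, map_smul, smul_eq_mul]

lemma eq_zero_of_mul {t z : ℂ} (h : z = t * z) (ht : t ≠ 1) : z = 0 := by
  by_contra hz
  exact ht (mul_right_cancel₀ hz (by rw [← h, one_mul]))

lemma I_ne : Complex.I ≠ 1 ∧ -Complex.I ≠ 1 ∧ (-1 : ℂ) ≠ 1 := by
  refine ⟨?_, ?_, ?_⟩ <;> intro h <;> have := congrArg Complex.re h <;> norm_num at this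

lemma Mom.zero_left (h : Mom d R x y E) (a b c e : Fin d) (h1 : c ≠ a) (h2 : e ≠ a) :
    E (x a * x b * (y c * y e)) = 0 := by
  refine eq_zero_of_mul (h.phase a a b c e) ?_
  by_cases hb : b = a <;> simp [hb, h1, h2, I_ne]

lemma Mom.zero_right (h : Mom d R x y E) (a b c e : Fin d) (h1 : a ≠ c) (h2 : b ≠ c) :
    E (x a * x b * (y c * y e)) = 0 := by
  refine eq_zero_of_mul (h.phase c a b c e) ?_
  by_cases hb : e = c <;> simp [hb, h1, h2, I_ne]

lemma Mom.mix (h : Mom d R x y E) (a b : Fin d) (hab : a ≠ b) :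
    E (x a * x a * (y a * y a)) = (1/4) * (E (x a * x a * (y a * y a)) +
      E (x b * x b * (y b * y b)) + 4 * E (x a * x b * (y a * y b))) := by
  conv_lhs => rw [h.inv _ (mix_mem a b hab)]
  have h1 : ∀ z : Fin d → R, ∀ t : ℂ, (∑ k, ((1 : Matrix (Fin d) (Fin d) ℂ) a k -
      t * ((Pi.single a 1 - Pi.single b 1 : Fin d → ℂ) a *
        (Pi.single a 1 - Pi.single b 1 : Fin d → ℂ) k)) • z k) = (1 - t) • z a + t • z b := by
    intro z t
    simp [sub_smul, mul_sub, Finset.sum_sub_distrib, Matrix.one_apply, Pi.single_apply, hab]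
    abel
  have hc : ∀ k, star ((1 - ((1 - Complex.I) / 2) • Matrix.vecMulVec (Pi.single a 1 - Pi.single b 1)
      (Pi.single a 1 - Pi.single b 1) : Matrix (Fin d) (Fin d) ℂ) a k) =
      ((1 : Matrix (Fin d) (Fin d) ℂ) a k -
      ((1 + Complex.I) / 2) * ((Pi.single a 1 - Pi.single b 1 : Fin d → ℂ) a *
        (Pi.single a 1 - Pi.single b 1 : Fin d → ℂ) k)) := by
    intro k
    simp only [Matrix.sub_apply, Matrix.smul_apply, vecMulVec_apply, Pi.sub_apply,
      Pi.single_apply, Matrix.one_apply]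
    split_ifs <;> simp
  simp only [hc]
  simp only [Matrix.sub_apply, Matrix.smul_apply, vecMulVec_apply, smul_eq_mul]
  rw [h1, h1]
  have z1 := h.zero_left a b b b hab.symm hab.symm
  have z2 := h.zero_left b a a a hab hab
  have z3 := h.zero_right a a b a hab hab
  have z4 := h.zero_right b b a b hab.symm hab.symm
  have z5 := h.zero_left a a b b hab.symm hab.symm
  have z6 := h.zero_left b b a a hab hab
  have key : ∀ p q s t : ℂ, ((p • x a + q • x b) * (p • x a + q • x b) *
      ((s • y a + t • y b) * (s • y a + t • y b))) =
      (p^2*s^2) • (x a * x a * (y a * y a)) + (q^2*t^2) • (x b * x b * (y b * y b)) +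
      (4*p*q*s*t) • (x a * x b * (y a * y b)) + (p^2*t^2) • (x a * x a * (y b * y b)) +
      (q^2*s^2) • (x b * x b * (y a * y a)) + (2*p^2*s*t) • (x a * x a * (y b * y a)) +
      (2*q^2*s*t) • (x b * x b * (y a * y b)) + (2*p*q*s^2) • (x b * x a * (y a * y a)) +
      (2*p*q*t^2) • (x a * x b * (y b * y b)) := by
    intro p q s t
    simp only [Algebra.smul_def, map_mul, map_pow, map_ofNat]
    ring
  rw [key]
  simp only [map_add, map_smul, z1, z2, z3, z4, z5, z6, smul_eq_mul]
  have hI : Complex.I ^ 2 = -1 := Complex.I_sq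
  have hI4 : Complex.I ^ 4 = 1 := Complex.I_pow_four
  have e1 : (1 - (1 - Complex.I)/2)^2 * (1 - (1 + Complex.I)/2)^2 = 1/4 := by
    ring_nf; rw [hI4, hI]; norm_num
  have e2 : ((1 - Complex.I)/2)^2 * ((1 + Complex.I)/2)^2 = 1/4 := by
    ring_nf; rw [hI4, hI]; norm_num
  have e3 : 4 * (1 - (1 - Complex.I)/2) * ((1 - Complex.I)/2) * (1 - (1 + Complex.I)/2) *
      ((1 + Complex.I)/2) = 1 := by
    ring_nf; rw [hI4, hI]; norm_num
  rw [e1, e2, e3]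
  ring

lemma Mom.diag (h : Mom d R x y E) (a b : Fin d) (hab : a ≠ b) :
    E (x a * x a * (y a * y a)) = E (x b * x b * (y b * y b)) ∧
    E (x a * x a * (y a * y a)) = 2 * E (x a * x b * (y a * y b)) := by
  have h1 := h.mix a b hab
  have h2 := h.mix b a hab.symm
  rw [show x b * x a * (y b * y a) = x a * x b * (y a * y b) by ring] at h2
  constructor
  · linear_combination h1 - h2
  · linear_combination (3/2) * h1 + (1/2) * h2

lemma Mom.exists (h : Mom d R x y E) (hd : 1 ≤ d) (a b c e : Fin d) :
    E (x a * x b * (y c * y e)) = ((d : ℂ) * (d + 1))⁻¹ *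
      ((if a = c then 1 else 0) * (if b = e then 1 else 0) +
       (if a = e then 1 else 0) * (if b = c then 1 else 0)) := by
  let o : Fin d := ⟨0, hd⟩
  set α := E (x o * x o * (y o * y o)) with hα
  have hαa : ∀ a, E (x a * x a * (y a * y a)) = α := by
    intro a
    by_cases hao : a = o
    · rw [hao]
    · exact (h.diag a o hao).1
  have hβ : ∀ a b, E (x a * x b * (y a * y b)) = α / 2 * (1 + if a = b then 1 else 0) := by
    intro a b
    by_cases hab : a = b
    · subst hab; rw [hαa]; simp; ring
    · have := (h.diag a b hab).2
      rw [hαa] at this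
      simp [hab]; rw [this]; ring
  have hn : α / 2 = ((d : ℂ) * (d + 1))⁻¹ := by
    have : E ((∑ a, x a * y a) * (∑ b, x b * y b)) = 1 := by rw [h.norm, one_mul, h.one]
    rw [Finset.sum_mul_sum, map_sum] at this
    simp only [map_sum] at this
    have h2 : ∀ a b, E (x a * y a * (x b * y b)) = α / 2 * (1 + if a = b then 1 else 0) := by
      intro a b; rw [← hβ]; congr 1; ring
    simp only [h2, ← Finset.mul_sum, Finset.sum_add_distrib] at this
    simp at this
    apply eq_inv_of_mul_eq_one_left
    linear_combination this
  rw [← hn]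
  by_cases h1 : a = c
  · subst h1
    by_cases h2 : b = e
    · subst h2
      rw [hβ]
      by_cases hab : a = b <;> simp [hab, Ne.symm]
    · have hr : ((if a = e then 1 else 0) * (if b = a then 1 else 0) : ℂ) = 0 := by
        by_cases h3 : a = e
        · have : b ≠ a := fun h4 => h2 (h4.trans h3)
          simp [this]
        · simp [h3]
      rw [hr]
      by_cases h3 : b = a
      · subst h3
        rw [mul_comm (y b), h.zero_right _ _ _ _ h2 h2]
        simp [h2]
      · by_cases h4 : e = a
        · subst h4
          rw [mul_comm (x e), h.zero_left _ _ _ _ (Ne.symm h2) (Ne.symm h2)]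
          simp [h2]
        · rw [mul_comm (x a), h.zero_left _ _ _ _ (Ne.symm h3) (Ne.symm h2)]
          simp [h2]
  · by_cases h2 : b = c
    · subst h2
      by_cases h3 : a = e
      · subst h3
        rw [mul_comm (y b), hβ]
        simp [h1]
      · rw [h.zero_left _ _ _ _ (Ne.symm h1) (Ne.symm h3)]
        simp [h1, h3]
    · rw [h.zero_right _ _ _ _ h1 h2]
      simp [h1, h2]

lemma Mom.final (h : Mom d R x y E) (hd : 1 ≤ d) (K : Matrix (Fin d) (Fin d) ℂ) :
    E ((∑ a, ∑ b, K a b • (y a * x b)) * (∑ a, ∑ b, star (K a b) • (y b * x a))) =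
      ((d : ℂ) * (d + 1))⁻¹ * (K.trace * star K.trace + (Kᴴ * K).trace) := by
  have h1 : ∀ a b c e, E (K a b • (y a * x b) * star (K c e) • (y e * x c)) =
      ((d : ℂ) * (d + 1))⁻¹ * (K a b * star (K c e) * ((if b = a then 1 else 0) *
        (if c = e then 1 else 0) + (if b = e then 1 else 0) * (if c = a then 1 else 0))) := by
    intro a b c e
    rw [smul_mul_smul_comm, map_smul, show y a * x b * (y e * x c) = x b * x c * (y a * y e) by ring,
      h.exists hd, smul_eq_mul]
    ring
  simp only [Finset.sum_mul, Finset.mul_sum, map_sum, h1]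
  simp only [← Finset.mul_sum]
  congr 1
  simp only [mul_add, Finset.sum_add_distrib]
  congr 1
  · simp [Matrix.trace, Finset.sum_mul, Finset.mul_sum]
  · simp [Matrix.trace, Matrix.mul_apply]
    rw [Finset.sum_comm]
    simp only [mul_comm]

lemma unitary_compact (d : ℕ) : CompactSpace (Matrix.unitaryGroup (Fin d) ℂ) := by
  apply isCompact_iff_compactSpace.mp
  have hcomp : IsCompact {M : Matrix (Fin d) (Fin d) ℂ | ∀ i j, M i j ∈ Metric.closedBall (0:ℂ) 1} := by
    have := isCompact_univ_pi (X := fun _ : Fin d => Fin d → ℂ)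
      (s := fun _ => Set.pi Set.univ (fun _ => Metric.closedBall (0:ℂ) 1))
      (fun _ => isCompact_univ_pi (fun _ => isCompact_closedBall _ _))
    have he : {M : Fin d → Fin d → ℂ | ∀ i j, M i j ∈ Metric.closedBall (0:ℂ) 1} =
        Set.pi Set.univ (fun _ => Set.pi Set.univ (fun _ => Metric.closedBall (0:ℂ) 1)) := by
      ext M
      simp [Set.mem_pi]
    rw [← he] at this
    exact this
  refine hcomp.of_isClosed_subset ?_ ?_
  · have : ((Matrix.unitaryGroup (Fin d) ℂ : Set (Matrix (Fin d) (Fin d) ℂ))) =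
        {M | M * star M = 1} := by
      ext M; exact Matrix.mem_unitaryGroup_iff
    rw [this]
    exact isClosed_eq (by fun_prop) continuous_const
  · intro M hM i j
    simpa using entry_norm_bound_of_unitary hM i j

noncomputable def haarE {d : ℕ} (μ : Measure (Matrix.unitaryGroup (Fin d) ℂ))
    [IsProbabilityMeasure μ] : C(Matrix.unitaryGroup (Fin d) ℂ, ℂ) →ₗ[ℂ] ℂ :=
  haveI := unitary_compact d
  have hi : ∀ f : C(Matrix.unitaryGroup (Fin d) ℂ, ℂ), Integrable f μ := fun f =>
    f.continuous.integrable_of_hasCompactSupport (HasCompactSupport.of_compactSpace f)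
  { toFun := fun f => ∫ U, f U ∂μ
    map_add' := fun f g => integral_add (hi f) (hi g)
    map_smul' := fun c f => integral_const_mul c f }

def xvec {d : ℕ} (ψ : Fin d → ℂ) (a : Fin d) : C(Matrix.unitaryGroup (Fin d) ℂ, ℂ) where
  toFun U := ((U : Matrix (Fin d) (Fin d) ℂ) *ᵥ ψ) a
  continuous_toFun := by
    have : Continuous fun U : Matrix.unitaryGroup (Fin d) ℂ =>
      (U : Matrix (Fin d) (Fin d) ℂ) *ᵥ ψ := continuous_subtype_val.matrix_mulVec continuous_const
    exact (continuous_apply a).comp this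

lemma haar_mom (d : ℕ) (μ : Measure (Matrix.unitaryGroup (Fin d) ℂ))
    [μ.IsHaarMeasure] [IsProbabilityMeasure μ] (ψ : Fin d → ℂ) (hψ : star ψ ⬝ᵥ ψ = 1) :
    Mom d C(Matrix.unitaryGroup (Fin d) ℂ, ℂ) (xvec ψ) (fun a => star (xvec ψ a)) (haarE μ) where
  one := by simp [haarE]
  norm := by
    ext U
    have hU : (U : Matrix (Fin d) (Fin d) ℂ)ᴴ * U = 1 := Matrix.mem_unitaryGroup_iff'.mp U.2
    have : star ((U : Matrix (Fin d) (Fin d) ℂ) *ᵥ ψ) ⬝ᵥ ((U : Matrix (Fin d) (Fin d) ℂ) *ᵥ ψ) = 1 := by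
      rw [Matrix.star_mulVec, ← Matrix.dotProduct_mulVec, Matrix.mulVec_mulVec, hU, Matrix.one_mulVec, hψ]
    rw [← dotProduct_comm] at this
    simpa [dotProduct, xvec] using this
  inv V hV a b c e := by
    let f : C(Matrix.unitaryGroup (Fin d) ℂ, ℂ) :=
      xvec ψ a * xvec ψ b * (star (xvec ψ c) * star (xvec ψ e))
    have h1 : ∫ U, f ((⟨V, hV⟩ : Matrix.unitaryGroup (Fin d) ℂ) * U) ∂μ = ∫ U, f U ∂μ :=
      integral_mul_left_eq_self _ _
    change ∫ U, f U ∂μ = ∫ U, _ ∂μ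
    rw [← h1]
    congr 1
    funext U
    have h2 : ∀ a, xvec ψ a ((⟨V, hV⟩ : Matrix.unitaryGroup (Fin d) ℂ) * U) =
        ∑ k, V a k * xvec ψ k U := by
      intro a
      change ((V * (U : Matrix (Fin d) (Fin d) ℂ)) *ᵥ ψ) a = _
      rw [← Matrix.mulVec_mulVec]
      rfl
    simp [f, h2]

/-- **Average channel fidelity over Haar random pure states.**
For a Kraus channel `Γ(X) = Σᵢ Kᵢ X Kᵢᴴ` with `Σᵢ Kᵢᴴ Kᵢ = I` and any unit vector `ψ`:
`∫ ⟨Uψ, Γ(Uψ(Uψ)ᴴ) Uψ⟩ dμ(U) = (d⁻¹·Σᵢ |tr Kᵢ|² + 1)/(d + 1)`. -/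
theorem average_channel_fidelity (d : ℕ) (hd : 1 ≤ d)
    (μ : Measure (Matrix.unitaryGroup (Fin d) ℂ))
    [μ.IsHaarMeasure] [IsProbabilityMeasure μ]
    (r : ℕ) (K : Fin r → Matrix (Fin d) (Fin d) ℂ)
    (hK : ∑ i, (K i)ᴴ * K i = 1)
    (ψ : Fin d → ℂ) (hψ : star ψ ⬝ᵥ ψ = 1) :
    (∫ U, star ((U : Matrix (Fin d) (Fin d) ℂ) *ᵥ ψ) ⬝ᵥ
        ((∑ i, K i *
            Matrix.vecMulVec ((U : Matrix (Fin d) (Fin d) ℂ) *ᵥ ψ)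
              (star ((U : Matrix (Fin d) (Fin d) ℂ) *ᵥ ψ)) * (K i)ᴴ) *ᵥ
          ((U : Matrix (Fin d) (Fin d) ℂ) *ᵥ ψ)) ∂μ)
      = (((((d : ℝ))⁻¹ * ∑ i, ‖(K i).trace‖ ^ 2 + 1) / ((d : ℝ) + 1) : ℝ) : ℂ) := by
  have hm := haar_mom d μ ψ hψ
  have h0 : ∀ (v : Fin d → ℂ) (A : Matrix (Fin d) (Fin d) ℂ),
      star v ⬝ᵥ ((A * vecMulVec v (star v) * Aᴴ) *ᵥ v) =
      (∑ a, ∑ b, A a b * (star (v a) * v b)) * (∑ a, ∑ b, star (A a b) * (star (v b) * v a)) := by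
    intro v A
    rw [← Matrix.mulVec_mulVec, ← Matrix.mulVec_mulVec, Matrix.vecMulVec_mulVec,
      Matrix.mulVec_smul, dotProduct_smul]
    have e1 : star v ⬝ᵥ A *ᵥ v = ∑ a, ∑ b, A a b * (star (v a) * v b) := by
      simp only [dotProduct, Matrix.mulVec, Finset.mul_sum, Pi.star_apply]
      exact Finset.sum_congr rfl fun a _ => Finset.sum_congr rfl fun b _ => by ring
    have e2 : star v ⬝ᵥ Aᴴ *ᵥ v = ∑ a, ∑ b, star (A a b) * (star (v b) * v a) := by
      simp only [dotProduct, Matrix.mulVec, Finset.mul_sum, Pi.star_apply,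
        Matrix.conjTranspose_apply]
      rw [Finset.sum_comm]
      exact Finset.sum_congr rfl fun a _ => Finset.sum_congr rfl fun b _ => by ring
    rw [e1, e2]
    simp
  have h1 : (∫ U, star ((U : Matrix (Fin d) (Fin d) ℂ) *ᵥ ψ) ⬝ᵥ
        ((∑ i, K i *
            Matrix.vecMulVec ((U : Matrix (Fin d) (Fin d) ℂ) *ᵥ ψ)
              (star ((U : Matrix (Fin d) (Fin d) ℂ) *ᵥ ψ)) * (K i)ᴴ) *ᵥ
          ((U : Matrix (Fin d) (Fin d) ℂ) *ᵥ ψ)) ∂μ) =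
      haarE μ (∑ i, (∑ a, ∑ b, K i a b • (star (xvec ψ a) * xvec ψ b)) *
        (∑ a, ∑ b, star (K i a b) • (star (xvec ψ b) * xvec ψ a))) := by
    change _ = ∫ U, _ ∂μ
    congr 1
    funext U
    rw [Matrix.sum_mulVec, dotProduct_sum]
    simp only [h0]
    simp [xvec]
  rw [h1, map_sum]
  simp only [hm.final hd]
  rw [← Finset.mul_sum, Finset.sum_add_distrib, ← Matrix.trace_sum, hK, Matrix.trace_one]
  have hd0 : (d : ℂ) ≠ 0 := by exact_mod_cast (by omega : d ≠ 0)
  have hd1 : (d : ℂ) + 1 ≠ 0 := by exact_mod_cast (by omega : d + 1 ≠ 0)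
  have h2 : ∀ z : ℂ, z * star z = ((‖z‖ ^ 2 : ℝ) : ℂ) := by
    intro z
    rw [Complex.star_def, Complex.mul_conj, Complex.normSq_eq_norm_sq]
  simp only [h2]
  push_cast
  simp only [Fintype.card_fin]
  field_simp
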